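/- Fix a real number t with 0 < t < 1. Given an admissible labeling (a,b,e;c,d,f) of the edges of a tetrahedron, the sequence k ↦ t^{−4k}·{a+2k, b+2k, e+2k; c+2k, d+2k, f+2k}_u of scaled unitary 6j-symbols converges as k → ∞. -/

import Mathlib

open Filter Finset

/-- A triple of nonnegative integers is admissible if its sum is even and
it satisfies every triangle inequality. -/
def Admissible (a b c : ℕ) : Prop :=
  Even (a + b + c) ∧ a ≤ b + c ∧ b ≤ a + c ∧ c ≤ a + b

/-- A labeling (a,b,e;c,d,f) of the edges of a tetrahedron is admissible if the
four vertex triples (a,d,e), (b,c,e), (a,b,f), (c,d,f) are admissible. -/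
def TetAdmissible (a b e c d f : ℕ) : Prop :=
  Admissible a d e ∧ Admissible b c e ∧ Admissible a b f ∧ Admissible c d f

/-- The quantized integer `[n] = (t^{2n} - t^{-2n})/(t^2 - t^{-2})`. -/
noncomputable def qint (t : ℝ) (n : ℕ) : ℝ :=
  (t ^ (2 * n) - (t ^ (2 * n))⁻¹) / (t ^ 2 - (t ^ 2)⁻¹)

/-- The quantized factorial `[n]! = [n]·[n-1]!`, `[0]! = 1`. -/
noncomputable def qfact (t : ℝ) : ℕ → ℝ
  | 0 => 1
  | n + 1 => qint t (n + 1) * qfact t n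

/-- `θ(a,b,c)` for an admissible triple. -/
noncomputable def qtheta (t : ℝ) (a b c : ℕ) : ℝ :=
  (-1 : ℝ) ^ ((a + b + c) / 2) *
    (qfact t ((a + b + c) / 2 + 1) * qfact t ((a + b - c) / 2) *
      qfact t ((a + c - b) / 2) * qfact t ((b + c - a) / 2)) /
    (qfact t a * qfact t b * qfact t c)

/-- Product of the quantized factorials of the strand numbers of a triple. -/
noncomputable def strandProd (t : ℝ) (a b c : ℕ) : ℝ :=
  qfact t ((a + b - c) / 2) * qfact t ((b + c - a) / 2) * qfact t ((a + c - b) / 2)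

/-- The tetrahedral coefficient `Tet(a,b,e;c,d,f)`. -/
noncomputable def Tet (t : ℝ) (a b e c d f : ℕ) : ℝ :=
  (strandProd t a d e * strandProd t b c e * strandProd t a b f * strandProd t c d f) /
      (qfact t a * qfact t b * qfact t c * qfact t d * qfact t e * qfact t f) *
    ∑ s ∈ Finset.Icc
        (max ((a + d + e) / 2) (max ((b + c + e) / 2) (max ((a + b + f) / 2) ((c + d + f) / 2))))
        (min ((a + b + c + d) / 2) (min ((a + c + e + f) / 2) ((b + d + e + f) / 2))),
      ((-1 : ℝ) ^ s * qfact t (s + 1)) /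
        (qfact t ((a + b + c + d) / 2 - s) * qfact t ((a + c + e + f) / 2 - s) *
          qfact t ((b + d + e + f) / 2 - s) *
          qfact t (s - (a + d + e) / 2) * qfact t (s - (b + c + e) / 2) *
          qfact t (s - (a + b + f) / 2) * qfact t (s - (c + d + f) / 2))

/-- The unitary 6j-symbol `{a,b,e;c,d,f}_u`. -/
noncomputable def sixj (t : ℝ) (a b e c d f : ℕ) : ℝ :=
  Tet t a b e c d f /
    Real.sqrt (qtheta t a d e * qtheta t b c e * qtheta t a b f * qtheta t c d f)

/-- The q-Pochhammer symbol `(x;q)_n`. -/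
noncomputable def qPoch (x q : ℝ) (n : ℕ) : ℝ := ∏ i ∈ Finset.range n, (1 - x * q ^ i)

/-- The infinite q-Pochhammer symbol `(x;q)_∞`. -/
noncomputable def qPochInf (x q : ℝ) : ℝ := ∏' i : ℕ, (1 - x * q ^ i)

lemma qPoch_succ (x q : ℝ) (n : ℕ) :
    qPoch x q (n + 1) = qPoch x q n * (1 - x * q ^ n) :=
  Finset.prod_range_succ _ _

lemma qPoch_self_pos {q : ℝ} (hq0 : 0 < q) (hq1 : q < 1) (n : ℕ) : 0 < qPoch q q n :=
  Finset.prod_pos fun i _ => by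
    have := pow_lt_one₀ hq0.le hq1 (Nat.succ_ne_zero i)
    rw [pow_succ'] at this
    linarith

lemma antitone_qPoch_self {q : ℝ} (hq0 : 0 < q) (hq1 : q < 1) : Antitone (qPoch q q) := by
  refine antitone_nat_of_succ_le fun n => ?_
  rw [qPoch_succ]
  exact mul_le_of_le_one_right (qPoch_self_pos hq0 hq1 n).le
    (by have : 0 < q * q ^ n := by positivity
        linarith)

lemma qPoch_self_le_one {q : ℝ} (hq0 : 0 < q) (hq1 : q < 1) (n : ℕ) : qPoch q q n ≤ 1 :=
  (antitone_qPoch_self hq0 hq1 n.zero_le).trans_eq (Finset.prod_range_zero _)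

lemma tendsto_qPoch_self {q : ℝ} (hq0 : 0 < q) (hq1 : q < 1) :
    Tendsto (qPoch q q) atTop (nhds (qPochInf q q)) := by
  have hs : Summable fun i : ℕ => ‖-(q * q ^ i)‖ := by
    simpa [abs_of_pos hq0] using (summable_geometric_of_lt_one hq0.le hq1).mul_left q
  have := (multipliable_one_add_of_summable hs).tendsto_prod_tprod_nat
  simp only [← sub_eq_add_neg] at this
  exact this

lemma qPochInf_self_le {q : ℝ} (hq0 : 0 < q) (hq1 : q < 1) (n : ℕ) :
    qPochInf q q ≤ qPoch q q n :=
  (antitone_qPoch_self hq0 hq1).le_of_tendsto (tendsto_qPoch_self hq0 hq1) n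

lemma qPochInf_self_pos {q : ℝ} (hq0 : 0 < q) (hq1 : q < 1) : 0 < qPochInf q q := by
  have hs : Summable fun i : ℕ => ‖-(q * q ^ i)‖ := by
    simpa [abs_of_pos hq0] using (summable_geometric_of_lt_one hq0.le hq1).mul_left q
  refine lt_of_le_of_ne (ge_of_tendsto' (tendsto_qPoch_self hq0 hq1)
    fun n => (qPoch_self_pos hq0 hq1 n).le) (Ne.symm ?_)
  have := tprod_one_add_ne_zero_of_summable (f := fun i : ℕ => -(q * q ^ i)) (fun i => by
    have := pow_lt_one₀ hq0.le hq1 (Nat.succ_ne_zero i)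
    rw [pow_succ'] at this
    exact (by linarith : (0 : ℝ) < 1 + -(q * q ^ i)).ne') hs
  simp only [← sub_eq_add_neg] at this
  exact this

lemma qint_succ {t : ℝ} (ht0 : 0 < t) (ht1 : t < 1) (n : ℕ) :
    qint t (n + 1) = (1 - t ^ 4 * (t ^ 4) ^ n) * ((t ^ (2 * n))⁻¹ * (1 - t ^ 4)⁻¹) := by
  have h4 : t ^ 4 < 1 := pow_lt_one₀ ht0.le ht1 (by norm_num)
  have h4' : 1 - t ^ 4 ≠ 0 := by linarith
  have hd : t ^ 2 - (t ^ 2)⁻¹ = -((1 - t ^ 4) * (t ^ 2)⁻¹) := by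
    field_simp
    ring
  rw [qint, hd]
  field_simp
  ring

/-- The quantized factorial is a `q`-Pochhammer symbol, `q = t ^ 4`, times an exponential factor. -/
lemma qfact_eq_qPoch_mul_exp {t : ℝ} (ht0 : 0 < t) (ht1 : t < 1) (n : ℕ) :
    qfact t n = qPoch (t ^ 4) (t ^ 4) n *
      Real.exp (-Real.log t * (n * (n - 1)) + -Real.log (1 - t ^ 4) * n) := by
  have h4 : t ^ 4 < 1 := pow_lt_one₀ ht0.le ht1 (by norm_num)
  have h4' : 0 < 1 - t ^ 4 := by linarith
  induction n with
  | zero => simp [qfact, qPoch]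
  | succ n ih =>
    have he : (t ^ (2 * n))⁻¹ * (1 - t ^ 4)⁻¹
        = Real.exp (-Real.log t * (2 * n) + -Real.log (1 - t ^ 4)) := by
      rw [Real.exp_add, Real.exp_neg (Real.log (1 - t ^ 4)), Real.exp_log h4', neg_mul,
        Real.exp_neg, ← Real.rpow_def_of_pos ht0]
      norm_cast
    rw [qfact, qint_succ ht0 ht1, ih, he, qPoch_succ]
    rw [show -Real.log t * (((n + 1 : ℕ) : ℝ) * (((n + 1 : ℕ) : ℝ) - 1))
        + -Real.log (1 - t ^ 4) * ((n + 1 : ℕ) : ℝ)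
      = (-Real.log t * (2 * n) + -Real.log (1 - t ^ 4))
        + (-Real.log t * (n * (n - 1)) + -Real.log (1 - t ^ 4) * n) by push_cast; ring,
      Real.exp_add (_ + _) (_ + _)]
    ring

lemma qfact_pos {t : ℝ} (ht0 : 0 < t) (ht1 : t < 1) (n : ℕ) : 0 < qfact t n := by
  rw [qfact_eq_qPoch_mul_exp ht0 ht1]
  exact mul_pos (qPoch_self_pos (by positivity) (pow_lt_one₀ ht0.le ht1 (by norm_num)) n)
    (Real.exp_pos _)

/-- Racah's alternating sum for a factorial-like function `F`, summed over `m ≤ s ≤ M`. -/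
noncomputable def racahSum (F : ℕ → ℝ) (A : Fin 4 → ℕ) (B : Fin 3 → ℕ) (m M : ℕ) : ℝ :=
  ∑ s ∈ Finset.Icc m M, (-1 : ℝ) ^ s * F (s + 1) / ((∏ i, F (B i - s)) * ∏ j, F (s - A j))

/-- The ratio of factorials under the square root in Racah's formula. -/
noncomputable def racahRatio (F : ℕ → ℝ) (A : Fin 4 → ℕ) (B : Fin 3 → ℕ) : ℝ :=
  (∏ i, ∏ j, F (B i - A j)) / ∏ j, F (A j + 1)

lemma racahSum_eq_tsum (F : ℕ → ℝ) (A : Fin 4 → ℕ) (B : Fin 3 → ℕ) {m M : ℕ} (hmM : m ≤ M) :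
    racahSum F A B m M = ∑' j : ℕ, if j ≤ M - m then (-1 : ℝ) ^ (M - j) * F (M - j + 1) /
      ((∏ i, F (B i - (M - j))) * ∏ l, F (M - j - A l)) else 0 := by
  rw [tsum_eq_sum (s := Finset.range (M - m + 1))
    fun j hj => if_neg (by simp only [Finset.mem_range] at hj; omega), racahSum]
  refine Finset.sum_nbij' (fun s => M - s) (fun j => M - j) ?_ ?_ ?_ ?_ ?_
  · intro s hs; simp only [Finset.mem_Icc, Finset.mem_range] at *; omega
  · intro s hs; simp only [Finset.mem_Icc, Finset.mem_range] at *; omega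
  · intro s hs; simp only [Finset.mem_Icc] at hs; omega
  · intro s hs; simp only [Finset.mem_range] at hs; omega
  · intro s hs
    simp only [Finset.mem_Icc] at hs
    rw [if_pos (by omega), show M - (M - s) = s by omega]

section Asymptotics

variable {F φ : ℕ → ℝ} {L w β : ℝ}

lemma tendsto_racahRatio (hL : 0 < L) (hlim : Tendsto φ atTop (nhds L))
    (hF : ∀ n : ℕ, F n = φ n * Real.exp (w * (n * (n - 1)) + β * n))
    (A : Fin 4 → ℕ) (B : Fin 3 → ℕ) (hAB : ∀ i j, A j ≤ B i) (hsum : ∑ j, A j = ∑ i, B i) :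
    ∃ l : ℝ, Tendsto (fun k : ℕ => Real.exp (w * (12 * k ^ 2 + (2 * ∑ j, (A j : ℝ) + 12) * k)) *
      √(racahRatio F (fun j => A j + 3 * k) (fun i => B i + 4 * k))) atTop (nhds l) := by
  set c : ℝ := w * ((∑ i, ∑ j, ((B i : ℝ) - A j) * (B i - A j - 1))
      - ∑ j, ((A j : ℝ) + 1) * A j)
    + β * ((∑ i, ∑ j, ((B i : ℝ) - A j)) - ∑ j, ((A j : ℝ) + 1)) with hc
  have hs : ∑ j, (A j : ℝ) = ∑ i, (B i : ℝ) := by exact_mod_cast hsum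
  have key : ∀ k : ℕ, Real.exp (w * (12 * k ^ 2 + (2 * ∑ j, (A j : ℝ) + 12) * k)) *
      √(racahRatio F (fun j => A j + 3 * k) (fun i => B i + 4 * k))
      = √((∏ i, ∏ j, φ (B i - A j + k)) / ∏ j, φ (A j + 1 + 3 * k)) * Real.exp (c / 2) := by
    intro k
    have h1 : racahRatio F (fun j => A j + 3 * k) (fun i => B i + 4 * k)
        = ((∏ i, ∏ j, φ (B i - A j + k)) / ∏ j, φ (A j + 1 + 3 * k)) *
          Real.exp (c - 2 * (w * (12 * k ^ 2 + (2 * ∑ j, (A j : ℝ) + 12) * k))) := by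
      have h2 : ∀ i j, F (B i + 4 * k - (A j + 3 * k)) = φ (B i - A j + k) *
          Real.exp (w * (((B i : ℝ) - A j + k) * (B i - A j + k - 1))
            + β * ((B i : ℝ) - A j + k)) := by
        intro i j
        have := hAB i j
        rw [show B i + 4 * k - (A j + 3 * k) = B i - A j + k by omega, hF]
        push_cast [this]
        rfl
      have h3 : ∀ j, F (A j + 3 * k + 1) = φ (A j + 1 + 3 * k) *
          Real.exp (w * (((A j : ℝ) + 1 + 3 * k) * (A j + 3 * k))
            + β * ((A j : ℝ) + 1 + 3 * k)) := by
        intro j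
        rw [show A j + 3 * k + 1 = A j + 1 + 3 * k by omega, hF]
        push_cast
        ring_nf
      simp only [racahRatio, h2, h3, Finset.prod_mul_distrib, ← Real.exp_sum]
      rw [mul_div_mul_comm, ← Real.exp_sub]
      congr 2
      rw [hc]
      simp only [Fin.sum_univ_three, Fin.sum_univ_four] at hs ⊢
      linear_combination (-8 * w * k) * hs
    rw [h1, Real.sqrt_mul' _ (Real.exp_pos _).le, ← Real.exp_half, mul_left_comm, ← Real.exp_add]
    congr 2
    ring
  simp only [key]
  refine ⟨_, Tendsto.mul_const _ (Tendsto.sqrt (Tendsto.div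
    (tendsto_finsetProd _ fun i _ => tendsto_finsetProd _ fun j _ =>
      hlim.comp (tendsto_atTop_mono (fun k => Nat.le_add_left k _) tendsto_id))
    (tendsto_finsetProd _ fun j _ => hlim.comp
      (tendsto_atTop_mono (fun k => (by simp only [id]; omega : id k ≤ A j + 1 + 3 * k))
        tendsto_id))
    (Finset.prod_pos fun _ _ => hL).ne'))⟩

lemma tendsto_racahSum (hw : 0 < w) (hL : 0 < L) (hLφ : ∀ n, L ≤ φ n) (hφ1 : ∀ n, φ n ≤ 1)
    (hlim : Tendsto φ atTop (nhds L))
    (hF : ∀ n : ℕ, F n = φ n * Real.exp (w * (n * (n - 1)) + β * n))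
    (A : Fin 4 → ℕ) (B : Fin 3 → ℕ) {m M : ℕ} (hA : ∀ j, A j ≤ m) (hmM : m ≤ M)
    (hB : ∀ i, M ≤ B i) (hsum : ∑ j, A j = ∑ i, B i) :
    ∃ l : ℝ, Tendsto (fun k : ℕ =>
      Real.exp (-(w * (12 * k ^ 2 + (2 * ∑ j, (A j : ℝ) + 8) * k))) *
      racahSum F (fun j => A j + 3 * k) (fun i => B i + 4 * k) (m + 3 * k) (M + 4 * k))
      atTop (nhds l) := by
  set c : ℝ := w * (((M : ℝ) + 1) * M - (∑ i, ((B i : ℝ) - M) * (B i - M - 1))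
      - ∑ j, ((M : ℝ) - A j) * (M - A j - 1))
    + β * ((M : ℝ) + 1 - (∑ i, ((B i : ℝ) - M)) - ∑ j, ((M : ℝ) - A j)) with hc
  have hs : ∑ j, (A j : ℝ) = ∑ i, (B i : ℝ) := by exact_mod_cast hsum
  set b : ℝ := 4 * ∑ j, (A j : ℝ) + 2 - 12 * M with hb
  have hb0 : 1 ≤ b := by
    have hB' : ∀ i, (M : ℝ) ≤ B i := fun i => by exact_mod_cast hB i
    rw [hb, hs, Fin.sum_univ_three]
    linarith [hB' 0, hB' 1, hB' 2]
  have hφ : ∀ n, 0 < φ n := fun n => hL.trans_le (hLφ n)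
  set G : ℕ → ℕ → ℝ := fun k j => if j ≤ M - m + k then
    (-1 : ℝ) ^ (M + j) * (φ (M + 1 + 4 * k - j) /
      ((∏ i, φ (B i - M + j)) * ∏ l, φ (M - A l + k - j))) *
      Real.exp (-(w * (6 * j ^ 2 + b * j))) else 0 with hG
  have key : ∀ k : ℕ, Real.exp (-(w * (12 * k ^ 2 + (2 * ∑ j, (A j : ℝ) + 8) * k))) *
      racahSum F (fun j => A j + 3 * k) (fun i => B i + 4 * k) (m + 3 * k) (M + 4 * k)
      = (∑' j, G k j) * Real.exp c := by
    intro k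
    rw [racahSum_eq_tsum _ _ _ (by omega), ← tsum_mul_left, ← tsum_mul_right]
    refine tsum_congr fun j => ?_
    by_cases hj : j ≤ M - m + k
    · have h1 : F (M + 4 * k - j + 1) = φ (M + 1 + 4 * k - j) *
          Real.exp (w * (((M : ℝ) + 1 + 4 * k - j) * (M + 4 * k - j))
            + β * ((M : ℝ) + 1 + 4 * k - j)) := by
        rw [show M + 4 * k - j + 1 = M + 1 + 4 * k - j by omega, hF,
          Nat.cast_sub (by omega)]
        push_cast
        ring_nf
      have h2 : ∀ i, F (B i + 4 * k - (M + 4 * k - j)) = φ (B i - M + j) *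
          Real.exp (w * (((B i : ℝ) - M + j) * (B i - M + j - 1))
            + β * ((B i : ℝ) - M + j)) := by
        intro i
        have := hB i
        rw [show B i + 4 * k - (M + 4 * k - j) = B i - M + j by omega, hF]
        push_cast [this]
        rfl
      have h3 : ∀ l, F (M + 4 * k - j - (A l + 3 * k)) = φ (M - A l + k - j) *
          Real.exp (w * (((M : ℝ) - A l + k - j) * (M - A l + k - j - 1))
            + β * ((M : ℝ) - A l + k - j)) := by
        intro l
        have := hA l
        rw [show M + 4 * k - j - (A l + 3 * k) = M - A l + k - j by omega, hF,
          Nat.cast_sub (by omega), Nat.cast_add, Nat.cast_sub (by omega)]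
      have h4 : (-1 : ℝ) ^ (M + 4 * k - j) = (-1) ^ (M + j) := by
        refine neg_one_pow_congr ?_
        simp only [Nat.even_iff]
        omega
      rw [if_pos (by omega), hG]
      simp only [if_pos hj, h1, h2, h3, h4, Finset.prod_mul_distrib, ← Real.exp_sum]
      rw [mul_mul_mul_comm, ← Real.exp_add, mul_div_assoc, mul_div_mul_comm, ← Real.exp_sub,
        mul_left_comm, mul_left_comm (Real.exp _), ← Real.exp_add, mul_assoc (_ * _),
        ← Real.exp_add, ← mul_assoc]
      congr 2
      rw [hc, hb]
      simp only [Fin.sum_univ_three, Fin.sum_univ_four] at hs ⊢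
      linear_combination (2 * w * j) * hs
    · rw [if_neg (by omega), hG]
      simp only [if_neg hj, mul_zero, zero_mul]
  simp only [key]
  have hsumm : Summable fun j : ℕ => (L ^ 7)⁻¹ * Real.exp (-w) ^ j :=
    (summable_geometric_of_lt_one (Real.exp_pos _).le
      (Real.exp_lt_one_iff.2 (neg_neg_of_pos hw))).mul_left _
  refine ⟨_, Tendsto.mul_const _ (tendsto_tsum_of_dominated_convergence
    (g := fun j => (-1 : ℝ) ^ (M + j) * (L / ((∏ i, φ (B i - M + j)) * ∏ _l : Fin 4, L)) *
      Real.exp (-(w * (6 * j ^ 2 + b * j)))) hsumm (fun j => ?_)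
    (Eventually.of_forall fun k j => ?_))⟩
  · refine Tendsto.congr' (f₁ := fun k => (-1 : ℝ) ^ (M + j) * (φ (M + 1 + 4 * k - j) /
      ((∏ i, φ (B i - M + j)) * ∏ l, φ (M - A l + k - j))) *
      Real.exp (-(w * (6 * j ^ 2 + b * j)))) ?_ ?_
    · filter_upwards [eventually_ge_atTop j] with k hk
      rw [hG]
      exact (if_pos (by omega)).symm
    · refine Tendsto.mul_const _ (Tendsto.const_mul _ (Tendsto.div (hlim.comp ?_)
        (Tendsto.const_mul _ (tendsto_finsetProd _ fun l _ => hlim.comp ?_)) ?_))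
      · exact tendsto_atTop_mono (fun k => by omega) (tendsto_sub_atTop_nat j)
      · exact tendsto_atTop_mono (fun k => by omega) (tendsto_sub_atTop_nat j)
      · exact (mul_pos (Finset.prod_pos fun _ _ => hφ _) (Finset.prod_pos fun _ _ => hL)).ne'
  · rw [hG]
    have hpos : 0 ≤ (L ^ 7)⁻¹ * Real.exp (-w) ^ j := by positivity
    dsimp only
    split_ifs with hj
    · rw [norm_mul, norm_mul, norm_pow, norm_neg, norm_one, one_pow, one_mul]
      have hden : L ^ 7 ≤ (∏ i, φ (B i - M + j)) * ∏ l, φ (M - A l + k - j) := by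
        have e1 : L ^ 3 ≤ ∏ i, φ (B i - M + j) := by
          simpa using Finset.prod_le_prod (s := Finset.univ) (f := fun _ : Fin 3 => L)
            (fun _ _ => hL.le) (fun i _ => hLφ (B i - M + j))
        have e2 : L ^ 4 ≤ ∏ l, φ (M - A l + k - j) := by
          simpa using Finset.prod_le_prod (s := Finset.univ) (f := fun _ : Fin 4 => L)
            (fun _ _ => hL.le) (fun l _ => hLφ (M - A l + k - j))
        calc L ^ 7 = L ^ 3 * L ^ 4 := by ring
          _ ≤ _ := mul_le_mul e1 e2 (by positivity) ((by positivity : 0 ≤ L ^ 3).trans e1)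
      have hden0 := (pow_pos hL 7).trans_le hden
      refine mul_le_mul ?_ ?_ (norm_nonneg _) (by positivity)
      · rw [Real.norm_of_nonneg (div_nonneg (hφ _).le hden0.le), ← one_div]
        exact div_le_div₀ zero_le_one (hφ1 _) (pow_pos hL 7) hden
      · rw [Real.norm_of_nonneg (Real.exp_pos _).le, ← Real.exp_nat_mul]
        refine Real.exp_le_exp.2 ?_
        have : (j : ℝ) ≤ 6 * j ^ 2 + b * j := by
          nlinarith [(Nat.cast_nonneg j : (0 : ℝ) ≤ j)]
        nlinarith
    · simpa using hpos

end Asymptotics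

/-- Racah's formula: the edge factorials cancel, and the twelve strand numbers are the differences
of the quadrilateral and triangle half-sums. -/
lemma sixj_eq_racah {t : ℝ} (ht0 : 0 < t) (ht1 : t < 1) {a b e c d f : ℕ}
    {A : Fin 4 → ℕ} {B : Fin 3 → ℕ}
    (hA0 : a + d + e = 2 * A 0) (hA1 : b + c + e = 2 * A 1) (hA2 : a + b + f = 2 * A 2)
    (hA3 : c + d + f = 2 * A 3) (hB0 : a + b + c + d = 2 * B 0)
    (hB1 : a + c + e + f = 2 * B 1) (hB2 : b + d + e + f = 2 * B 2) :
    sixj t a b e c d f =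
      (if Even (∑ j, A j) then √(racahRatio (qfact t) A B) else 0) *
      racahSum (qfact t) A B (max (A 0) (max (A 1) (max (A 2) (A 3))))
        (min (B 0) (min (B 1) (B 2))) := by
  have hp := qfact_pos ht0 ht1
  have hY : 0 < ∏ j, qfact t (A j + 1) := Finset.prod_pos fun _ _ => hp _
  have hX : 0 < ∏ i, ∏ j, qfact t (B i - A j) :=
    Finset.prod_pos fun _ _ => Finset.prod_pos fun _ _ => hp _
  set E : ℝ := qfact t a * qfact t b * qfact t c * qfact t d * qfact t e * qfact t f with hE
  have hE0 : 0 < E := by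
    have := hp a; have := hp b; have := hp c; have := hp d; have := hp e; have := hp f
    positivity
  have s01 : (a + d - e) / 2 = B 0 - A 1 := by omega
  have s02 : (d + e - a) / 2 = B 2 - A 2 := by omega
  have s03 : (a + e - d) / 2 = B 1 - A 3 := by omega
  have s11 : (b + c - e) / 2 = B 0 - A 0 := by omega
  have s12 : (c + e - b) / 2 = B 1 - A 2 := by omega
  have s13 : (b + e - c) / 2 = B 2 - A 3 := by omega
  have s21 : (a + b - f) / 2 = B 0 - A 3 := by omega
  have s22 : (b + f - a) / 2 = B 2 - A 0 := by omega
  have s23 : (a + f - b) / 2 = B 1 - A 1 := by omega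
  have s31 : (c + d - f) / 2 = B 0 - A 2 := by omega
  have s32 : (d + f - c) / 2 = B 2 - A 1 := by omega
  have s33 : (c + f - d) / 2 = B 1 - A 0 := by omega
  have a0 : (a + d + e) / 2 = A 0 := by omega
  have a1 : (b + c + e) / 2 = A 1 := by omega
  have a2 : (a + b + f) / 2 = A 2 := by omega
  have a3 : (c + d + f) / 2 = A 3 := by omega
  have b0 : (a + b + c + d) / 2 = B 0 := by omega
  have b1 : (a + c + e + f) / 2 = B 1 := by omega
  have b2 : (b + d + e + f) / 2 = B 2 := by omega
  have htet : Tet t a b e c d f = (∏ i, ∏ j, qfact t (B i - A j)) / E *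
      racahSum (qfact t) A B (max (A 0) (max (A 1) (max (A 2) (A 3))))
        (min (B 0) (min (B 1) (B 2))) := by
    simp only [Tet, strandProd, s01, s02, s03, s11, s12, s13, s21, s22, s23, s31, s32, s33,
      a0, a1, a2, a3, b0, b1, b2, racahSum, Fin.prod_univ_three, Fin.prod_univ_four, ← hE]
    congr 1
    · congr 1
      ring
    · refine Finset.sum_congr rfl fun s _ => ?_
      congr 1
      ring
  have htheta : qtheta t a d e * qtheta t b c e * qtheta t a b f * qtheta t c d f
      = (-1) ^ (∑ j, A j) * ((∏ i, ∏ j, qfact t (B i - A j)) * (∏ j, qfact t (A j + 1)) / E ^ 2) := by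
    simp only [qtheta, s01, s02, s03, s11, s12, s13, s21, s22, s23, s31, s32, s33,
      a0, a1, a2, a3, Fin.prod_univ_three, Fin.prod_univ_four, Fin.sum_univ_four, hE,
      div_mul_div_comm]
    rw [← mul_div_assoc]
    congr 1 <;> ring
  rw [sixj, htet, htheta, racahRatio]
  generalize (∏ i, ∏ j, qfact t (B i - A j)) = X at hX ⊢
  generalize (∏ j, qfact t (A j + 1)) = Y at hY ⊢
  split_ifs with hev
  · rw [hev.neg_one_pow, one_mul, Real.sqrt_div (by positivity), Real.sqrt_sq hE0.le,
      Real.sqrt_mul hX.le, Real.sqrt_div hX.le]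
    have hx := Real.sqrt_pos.2 hX
    have hy := Real.sqrt_pos.2 hY
    field_simp
    rw [Real.sq_sqrt hX.le, mul_comm]
  · rw [(Nat.not_even_iff_odd.1 hev).neg_one_pow, Real.sqrt_eq_zero_of_nonpos, div_zero, zero_mul]
    have : 0 < X * Y / E ^ 2 := by positivity
    linarith

/-- The sequence k ↦ t^{-4k}·{a+2k,b+2k,e+2k;c+2k,d+2k,f+2k}_u
converges. -/
theorem stmt_10 (t : ℝ) (ht0 : 0 < t) (ht1 : t < 1) (a b e c d f : ℕ)
    (h : TetAdmissible a b e c d f) :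
    ∃ L : ℝ, Filter.Tendsto
      (fun k => (t ^ (4 * k))⁻¹ *
        sixj t (a + 2 * k) (b + 2 * k) (e + 2 * k) (c + 2 * k) (d + 2 * k) (f + 2 * k))
      Filter.atTop (nhds L) := by
  obtain ⟨⟨⟨p0, q0⟩, h01, h02, h03⟩, ⟨⟨p1, q1⟩, h11, h12, h13⟩, ⟨⟨p2, q2⟩, h21, h22, h23⟩,
    ⟨⟨p3, q3⟩, h31, h32, h33⟩⟩ := h
  obtain ⟨r0, hr0⟩ : ∃ r, a + b + c + d = 2 * r := ⟨(a + b + c + d) / 2, by omega⟩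
  obtain ⟨r1, hr1⟩ : ∃ r, a + c + e + f = 2 * r := ⟨(a + c + e + f) / 2, by omega⟩
  obtain ⟨r2, hr2⟩ : ∃ r, b + d + e + f = 2 * r := ⟨(b + d + e + f) / 2, by omega⟩
  let A : Fin 4 → ℕ := ![p0, p1, p2, p3]
  let B : Fin 3 → ℕ := ![r0, r1, r2]
  have hsum : ∑ j, A j = ∑ i, B i := by
    simp only [A, B, Fin.sum_univ_three, Fin.sum_univ_four, Matrix.cons_val]
    omega
  have hsix : ∀ k : ℕ,
      sixj t (a + 2 * k) (b + 2 * k) (e + 2 * k) (c + 2 * k) (d + 2 * k) (f + 2 * k) =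
      (if Even (∑ j, A j) then
        √(racahRatio (qfact t) (fun j => A j + 3 * k) (fun i => B i + 4 * k)) else 0) *
      racahSum (qfact t) (fun j => A j + 3 * k) (fun i => B i + 4 * k)
        (max p0 (max p1 (max p2 p3)) + 3 * k) (min r0 (min r1 r2) + 4 * k) := by
    intro k
    have hev : Even (∑ j, (A j + 3 * k)) ↔ Even (∑ j, A j) := by
      rw [Finset.sum_add_distrib, Nat.even_add]
      simp [show Even 4 by decide]
    rw [sixj_eq_racah ht0 ht1 (A := fun j => A j + 3 * k) (B := fun i => B i + 4 * k)]
    · simp only [hev, A, B, Matrix.cons_val, max_add_add_right, min_add_add_right]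
    all_goals
      simp only [A, B, Matrix.cons_val]
      omega
  simp only [hsix]
  split_ifs with hev
  swap
  · exact ⟨0, by simp⟩
  have hq0 : 0 < t ^ 4 := by positivity
  have hq1 : t ^ 4 < 1 := pow_lt_one₀ ht0.le ht1 (by norm_num)
  have hF := qfact_eq_qPoch_mul_exp ht0 ht1
  obtain ⟨l₁, hl₁⟩ := tendsto_racahRatio (qPochInf_self_pos hq0 hq1)
    (tendsto_qPoch_self hq0 hq1) hF A B (by
      simp only [A, B, Fin.forall_fin_succ, Matrix.cons_val_zero, Matrix.cons_val_succ,
        IsEmpty.forall_iff, and_true]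
      omega) hsum
  obtain ⟨l₂, hl₂⟩ := tendsto_racahSum (neg_pos.2 (Real.log_neg ht0 ht1))
    (qPochInf_self_pos hq0 hq1) (qPochInf_self_le hq0 hq1) (qPoch_self_le_one hq0 hq1)
    (tendsto_qPoch_self hq0 hq1) hF A B
    (m := max p0 (max p1 (max p2 p3))) (M := min r0 (min r1 r2))
    (by
      simp only [A, Fin.forall_fin_succ, Matrix.cons_val_zero, Matrix.cons_val_succ,
        IsEmpty.forall_iff, and_true]
      omega)
    (by omega)
    (by
      simp only [B, Fin.forall_fin_succ, Matrix.cons_val_zero, Matrix.cons_val_succ,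
        IsEmpty.forall_iff, and_true]
      omega) hsum
  refine ⟨l₁ * l₂, (hl₁.mul hl₂).congr fun k => ?_⟩
  have ht : (t ^ (4 * k))⁻¹ = Real.exp (-Real.log t * (4 * k)) := by
    rw [neg_mul, Real.exp_neg, ← Real.rpow_def_of_pos ht0]
    norm_cast
  rw [ht, mul_mul_mul_comm, ← Real.exp_add]
  congr 2
  ring
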